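/- arXiv:1205.1348 — 2 statements merged into one kernel-verified Lean document; each statement's English description precedes it below -/
import Mathlib

section
/- For every even integer k with 2 ≤ k ≤ 2n, the depth of S/I^k is equal to 1. -/
open MvPolynomial

noncomputable section

/-- The depth of a module `M` with respect to an ideal `J`: the supremum of the lengths of
`M`-regular sequences consisting of elements of `J`. -/
noncomputable def depthWrt {R : Type*} [CommRing R] (J : Ideal R)
    (M : Type*) [AddCommGroup M] [Module R M] : ℕ∞ :=
  sSup {k : ℕ∞ | ∃ rs : List R, (rs.length : ℕ∞) = k ∧ (∀ r ∈ rs, r ∈ J) ∧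
    RingTheory.Sequence.IsRegular M rs}

/-- The type of the `2n+4` variables `a, b, c, d, x₁, y₁, …, xₙ, yₙ`. -/
abbrev Vars (n : ℕ) : Type := Fin 4 ⊕ Fin n ⊕ Fin n

variable (K : Type*) [Field K] (n : ℕ)

/-- The variable `a`. -/
def va : MvPolynomial (Vars n) K := X (Sum.inl 0)
/-- The variable `b`. -/
def vb : MvPolynomial (Vars n) K := X (Sum.inl 1)
/-- The variable `c`. -/
def vc : MvPolynomial (Vars n) K := X (Sum.inl 2)
/-- The variable `d`. -/
def vd : MvPolynomial (Vars n) K := X (Sum.inl 3)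
/-- The variable `xᵢ` (for `i = 0, …, n-1` corresponding to `x₁, …, xₙ`). -/
def vx (i : Fin n) : MvPolynomial (Vars n) K := X (Sum.inr (Sum.inl i))
/-- The variable `yᵢ` (for `i = 0, …, n-1` corresponding to `y₁, …, yₙ`). -/
def vy (i : Fin n) : MvPolynomial (Vars n) K := X (Sum.inr (Sum.inr i))

/-- The monomial ideal
`I = (a⁶, a⁵b, ab⁵, b⁶, a⁴b⁴c, a⁴b⁴d, a⁴x₁y₁², b⁴x₁²y₁, …, a⁴xₙyₙ², b⁴xₙ²yₙ)`. -/
def idealI : Ideal (MvPolynomial (Vars n) K) :=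
  Ideal.span
    ({va K n ^ 6, va K n ^ 5 * vb K n, va K n * vb K n ^ 5, vb K n ^ 6,
      va K n ^ 4 * vb K n ^ 4 * vc K n, va K n ^ 4 * vb K n ^ 4 * vd K n} ∪
     Set.range (fun i => va K n ^ 4 * vx K n i * vy K n i ^ 2) ∪
     Set.range (fun i => vb K n ^ 4 * vx K n i ^ 2 * vy K n i))

/-- The graded maximal ideal `m = (a,b,c,d,x₁,y₁,…,xₙ,yₙ)`. -/
def mMax : Ideal (MvPolynomial (Vars n) K) := Ideal.span (Set.range X)

/-!
Powers of `I` are monomial ideals, so the theorem is about exponent vectors. A monomial outside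
`I^k` that a power of each of `c`, `xᵢ`, `yᵢ` carries into `I^k` would be divisible by a product of
one `a⁴b⁴` and `k - 1` generators `a⁴xᵢyᵢ²`, `b⁴xᵢ²yᵢ`. As `k - 1` is odd, one of the two kinds is
more frequent at some `i`, and there `a⁴b⁴` can be traded for powers of `a⁶` or `b⁶`. Hence no such
monomial exists, `c + ∑ xᵢ + ∑ yᵢ` is regular on `S/I^k`, and the depth is at least one.

Conversely, for `k = 2j` the monomial `u = a^(4j+4) b^(4j) ∏_{i<j} (xᵢyᵢ)³ ∏_{i≥j} xᵢyᵢ · yⱼ` is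
not in `I^k`, but every variable other than `yⱼ` multiplies it into `I^k`. A regular pair `r₁, r₂`
would then satisfy `r₁u = s₁yⱼu`, `r₂u = s₂yⱼu` in `S/I^k`, and regularity would produce `g` with
`yⱼg = u` and `cg = 0`, contradicting `c · u/yⱼ ∉ I^k`.
-/

section Depth

open RingTheory.Sequence
open scoped Pointwise

variable {R M : Type*} [CommRing R] [AddCommGroup M] [Module R M] {J : Ideal R}

lemma one_le_depthWrt {r : R} (hr : r ∈ J) (hreg : IsSMulRegular M r)
    (hJ : J • (⊤ : Submodule R M) ≠ ⊤) : 1 ≤ depthWrt J M := by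
  refine le_sSup ⟨[r], by simp, by simpa using hr,
    (isWeaklyRegular_singleton_iff M r).mpr hreg, (ne_top_of_le_ne_top hJ ?_).symm⟩
  exact Submodule.smul_mono_left (by simpa [Ideal.ofList_singleton, Ideal.span_le] using hr)

lemma depthWrt_le_one (h : ∀ r₁ ∈ J, ∀ r₂ ∈ J, ¬ IsWeaklyRegular M [r₁, r₂]) :
    depthWrt J M ≤ 1 := by
  refine sSup_le ?_
  rintro _ ⟨rs, rfl, hJ, hreg⟩
  match rs, hJ, hreg with
  | [], _, _ => simp
  | [_], _, _ => simp
  | r₁ :: r₂ :: rs, hJ, hreg =>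
    exact absurd ((isWeaklyRegular_append_iff M [r₁, r₂] rs).mp hreg.toIsWeaklyRegular).1
      (h r₁ (hJ r₁ (by simp)) r₂ (hJ r₂ (by simp)))

lemma exists_smul_eq_of_isWeaklyRegular_pair {r₁ r₂ : R} (hreg : IsWeaklyRegular M [r₁, r₂])
    {y : R} {u : M} (h₁ : r₁ • u ∈ Submodule.span R {y • u})
    (h₂ : r₂ • u ∈ Submodule.span R {y • u}) :
    ∃ g : M, y • g = u ∧ ∀ c : R, c • u = 0 → c • g = 0 := by
  obtain ⟨a₁, ha₁⟩ := Submodule.mem_span_singleton.mp h₁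
  obtain ⟨a₂, ha₂⟩ := Submodule.mem_span_singleton.mp h₂
  rw [isWeaklyRegular_cons_iff, isWeaklyRegular_singleton_iff,
    isSMulRegular_quotient_iff_mem_of_smul_mem] at hreg
  obtain ⟨hr₁, hr₂⟩ := hreg
  obtain ⟨g, -, hg⟩ : a₁ • u ∈ r₁ • (⊤ : Submodule R M) := by
    refine hr₂ _ ⟨a₂ • u, trivial, ?_⟩
    calc r₁ • a₂ • u = a₂ • a₁ • y • u := by rw [smul_comm r₁, ha₁]
      _ = a₁ • a₂ • y • u := smul_comm _ _ _
      _ = r₂ • a₁ • u := by rw [smul_comm r₂, ha₂]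
  replace hg : r₁ • g = a₁ • u := hg
  refine ⟨g, hr₁ ?_, fun c hc => hr₁ ?_⟩
  · change r₁ • y • g = r₁ • u
    rw [smul_comm, hg, smul_comm, ha₁]
  · change r₁ • c • g = r₁ • 0
    rw [smul_comm, hg, smul_comm, hc, smul_zero, smul_zero]

lemma smul_top_quotient_ne_top {L : Ideal R} (hL : L ≤ J) (hJ : J ≠ ⊤) :
    J • (⊤ : Submodule R (R ⧸ L)) ≠ ⊤ := by
  have hmap : J.map (Ideal.Quotient.mk L) ≠ ⊤ := by
    rw [ne_eq, ← Ideal.comap_eq_top_iff (f := Ideal.Quotient.mk L),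
      Ideal.comap_map_of_surjective' _ Ideal.Quotient.mk_surjective, Ideal.mk_ker,
      sup_eq_left.mpr hL]
    exact hJ
  intro h
  rw [Ideal.smul_top_eq_map] at h
  exact hmap (by simpa using h)

end Depth

section MonomialIdeal

variable {σ R : Type*}

lemma mem_restrictSupportIdeal_iff [CommSemiring R] {E : Set (σ →₀ ℕ)} {hE : IsUpperSet E}
    {p : MvPolynomial σ R} : p ∈ restrictSupportIdeal R E hE ↔ ∀ w ∈ p.support, w ∈ E :=
  Iff.rfl

lemma monomial_one_mem_restrictSupportIdeal_iff [CommSemiring R] [Nontrivial R]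
    {E : Set (σ →₀ ℕ)} {hE : IsUpperSet E} {w : σ →₀ ℕ} :
    monomial w (1 : R) ∈ restrictSupportIdeal R E hE ↔ w ∈ E :=
  (monomial_mem_restrictSupport R).trans (by simp)

lemma restrictSupportIdeal_le_idealOfVars [CommSemiring R] {E : Set (σ →₀ ℕ)}
    {hE : IsUpperSet E} (h0 : 0 ∉ E) : restrictSupportIdeal R E hE ≤ idealOfVars σ R := by
  rw [← pow_one (idealOfVars σ R)]
  intro p hp
  rw [mem_pow_idealOfVars_iff]
  intro w hw
  rw [Nat.one_le_iff_ne_zero, ne_eq, Finsupp.degree_eq_zero_iff]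
  rintro rfl
  exact h0 (mem_restrictSupportIdeal_iff.mp hp _ hw)

lemma idealOfVars_ne_top [CommSemiring R] [Nontrivial R] : idealOfVars σ R ≠ ⊤ := by
  rw [Ideal.ne_top_iff_one, ← pow_one (idealOfVars σ R), ← C_1, C_mem_pow_idealOfVars_iff]
  simp

lemma span_range_monomial_pow_eq_restrictSupportIdeal [CommSemiring R] {ι : Type*}
    (e : ι → σ →₀ ℕ) (k : ℕ) {E : Set (σ →₀ ℕ)} (hE : IsUpperSet E)
    (h : ∀ w, w ∈ E ↔ ∃ c : ι →₀ ℕ, c.degree = k ∧ Finsupp.linearCombination ℕ e c ≤ w) :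
    Ideal.span (Set.range fun i => monomial (e i) (1 : R)) ^ k = restrictSupportIdeal R E hE := by
  have hprod (c : ι →₀ ℕ) : (c.prod fun i m => monomial (e i) (1 : R) ^ m) =
      monomial (Finsupp.linearCombination ℕ e c) 1 := by
    simp [Finsupp.linearCombination_apply, Finsupp.prod, Finsupp.sum, monomial_pow,
      monomial_sum_one]
  ext p
  rw [Ideal.span, Submodule.span_pow, ← Set.image_univ,
    Finsupp.image_pow_eq_finsuppProd_image]
  simp only [hprod]
  rw [← Set.image_image (fun s => monomial s (1 : R))]
  refine mem_ideal_span_monomial_image.trans ?_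
  rw [mem_restrictSupportIdeal_iff]
  simp [h]

variable [CommRing R]

lemma isSMulRegular_sum_X {E : Set (σ →₀ ℕ)} (hE : IsUpperSet E) (T : Finset σ)
    (hT : ∀ w, (∀ v ∈ T, ∃ N, w + Finsupp.single v N ∈ E) → w ∈ E) :
    IsSMulRegular (MvPolynomial σ R ⧸ restrictSupportIdeal R E hE)
      (∑ v ∈ T, X v : MvPolynomial σ R) := by
  classical
  rw [isSMulRegular_quotient_iff_mem_of_smul_mem]
  intro g hg
  by_contra hgE
  obtain ⟨w₀, hw₀g, hw₀E⟩ : ∃ w₀ ∈ g.support, w₀ ∉ E := by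
    simpa [mem_restrictSupportIdeal_iff] using hgE
  obtain ⟨v, hvT, hv⟩ : ∃ v ∈ T, ∀ N, w₀ + Finsupp.single v N ∉ E := by
    by_contra! h
    exact hw₀E (hT w₀ h)
  -- Among the monomials of `g` outside the `v`-saturation of `E`, let `w` have the largest
  -- `v`-degree; then no other monomial of `g` contributes to `w + v` in `(∑ v ∈ T, X v) * g`.
  obtain ⟨w, hw, hmax⟩ := Finset.exists_max_image
    {w ∈ g.support | ∀ N, w + Finsupp.single v N ∉ E} (fun w => w v)
    ⟨w₀, by simpa [hv] using hw₀g⟩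
  simp only [Finset.mem_filter, mem_support_iff] at hw hmax
  have hcoeff : coeff (w + Finsupp.single v 1) ((∑ v ∈ T, X v) * g) = coeff w g := by
    rw [Finset.sum_mul, coeff_sum, Finset.sum_eq_single_of_mem v hvT, add_comm w,
      coeff_X_mul]
    intro v' _ hv'
    rw [coeff_X_mul']
    split_ifs with hs
    · by_contra hne
      refine absurd (hmax _ ⟨hne, fun N hN => hw.2 (1 + N) (hE ?_ hN)⟩) (by simp [hv'])
      rw [Finsupp.single_add, ← add_assoc]
      gcongr
      exact tsub_le_self
    · rfl
  exact hw.2 1 (mem_restrictSupportIdeal_iff.mp hg _ (mem_support_iff.mpr (hcoeff ▸ hw.1)))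

lemma depthWrt_restrictSupportIdeal_le_one [Nontrivial R] {E : Set (σ →₀ ℕ)} (hE : IsUpperSet E)
    {w : σ →₀ ℕ} {y z : σ} (hy : w + Finsupp.single y 1 ∉ E)
    (hv : ∀ v ≠ y, w + Finsupp.single y 1 + Finsupp.single v 1 ∈ E)
    (hzy : z ≠ y) (hz : w + Finsupp.single z 1 ∉ E) :
    depthWrt (idealOfVars σ R) (MvPolynomial σ R ⧸ restrictSupportIdeal R E hE) ≤ 1 := by
  set L := restrictSupportIdeal R E hE
  let u : MvPolynomial σ R ⧸ L := Submodule.Quotient.mk (monomial (w + Finsupp.single y 1) 1)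
  have hXu (v : σ) (hvy : v ≠ y) : (X v : MvPolynomial σ R) • u = 0 := by
    rw [← Submodule.Quotient.mk_smul, Submodule.Quotient.mk_eq_zero, smul_eq_mul, X,
      monomial_mul, one_mul, add_comm, monomial_one_mem_restrictSupportIdeal_iff]
    exact hv v hvy
  have hu : idealOfVars σ R ≤
      (Submodule.span (MvPolynomial σ R) {(X y : MvPolynomial σ R) • u}).comap
        (LinearMap.toSpanSingleton (MvPolynomial σ R) (MvPolynomial σ R ⧸ L) u) := by
    rw [Ideal.span_le]
    rintro _ ⟨v, rfl⟩
    obtain rfl | hvy := eq_or_ne v y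
    · exact Submodule.mem_span_singleton_self _
    · simp [hXu v hvy]
  refine depthWrt_le_one fun r₁ hr₁ r₂ hr₂ hreg => ?_
  obtain ⟨g, hg, hann⟩ := exists_smul_eq_of_isWeaklyRegular_pair hreg (hu hr₁) (hu hr₂)
  obtain ⟨g, rfl⟩ := Submodule.Quotient.mk_surjective L g
  have hgw : coeff w g = 1 := by
    classical
    rw [← Submodule.Quotient.mk_smul, Submodule.Quotient.eq, smul_eq_mul] at hg
    by_contra hne
    refine hy (mem_restrictSupportIdeal_iff.mp hg _ (mem_support_iff.mpr ?_))
    rw [coeff_sub, add_comm w, coeff_X_mul, coeff_monomial, if_pos rfl]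
    exact sub_ne_zero.mpr hne
  have hzg := hann (X z) (hXu z hzy)
  rw [← Submodule.Quotient.mk_smul, Submodule.Quotient.mk_eq_zero, smul_eq_mul] at hzg
  refine hz (mem_restrictSupportIdeal_iff.mp hzg _ (mem_support_iff.mpr ?_))
  rw [add_comm w, coeff_X_mul, hgw]
  exact one_ne_zero

end MonomialIdeal

lemma sum_update_add {ι M : Type*} [Fintype ι] [DecidableEq ι] [AddCommMonoid M] (f : ι → M)
    (i : ι) (x : M) : ∑ j, Function.update f i x j + f i = ∑ j, f j + x := by
  rw [Finset.sum_update_of_mem (Finset.mem_univ i), ← Finset.erase_eq,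
    ← Finset.add_sum_erase Finset.univ f (Finset.mem_univ i)]
  abel

/-- The condition for a monomial `a ^ α * b ^ β * m`, with `m` of degree `γ` in `c` and `d`, to lie
in the `p`-th power of `(a⁶, a⁵b, ab⁵, b⁶, a⁴b⁴c, a⁴b⁴d)`: it is divisible by a product of `p`
generators, `q` of which are `a⁴b⁴c` or `a⁴b⁴d`. -/
def MemABCDPower (p α β γ : ℕ) : Prop :=
  ∃ p₁ p₂ p₃ p₄ q : ℕ, p₁ + p₂ + p₃ + p₄ + q = p ∧
    6 * p₁ + 5 * p₂ + p₃ + 4 * q ≤ α ∧ p₂ + 5 * p₃ + 6 * p₄ + 4 * q ≤ β ∧ q ≤ γ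

namespace MemABCDPower

variable {p α β γ : ℕ}

lemma mono {γ' : ℕ} (h : MemABCDPower p α β γ) (hγ : γ ≤ γ') : MemABCDPower p α β γ' := by
  obtain ⟨p₁, p₂, p₃, p₄, q, hp, hα, hβ, hq⟩ := h
  exact ⟨p₁, p₂, p₃, p₄, q, hp, hα, hβ, hq.trans hγ⟩

lemma swap (h : MemABCDPower p α β γ) : MemABCDPower p β α γ := by
  obtain ⟨p₁, p₂, p₃, p₄, q, hp, hα, hβ, hq⟩ := h
  exact ⟨p₄, p₃, p₂, p₁, q, by omega, by omega, by omega, hq⟩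

lemma of_six_mul_le_right (h : 6 * p ≤ β) : MemABCDPower p α β γ :=
  ⟨0, 0, 0, p, 0, by omega, by omega, by omega, by omega⟩

lemma of_six_mul_le_left (h : 6 * p ≤ α) : MemABCDPower p α β γ :=
  (of_six_mul_le_right h).swap

lemma zero_or_eq_one (h : MemABCDPower p α β γ) :
    MemABCDPower p α β 0 ∨ p = 1 ∧ 4 ≤ α ∧ 4 ≤ β := by
  -- Two factors `a⁴b⁴` are traded for `a⁶ · b⁶`, and a single one is absorbed by any other factor,
  -- for instance `a⁴b⁴ · a⁶ = b² · (a⁵b)²` and `a⁴b⁴ · a⁵b = a² · a⁶ · ab⁵`.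
  obtain ⟨p₁, p₂, p₃, p₄, q, hp, hα, hβ, -⟩ := h
  induction q using Nat.twoStepInduction generalizing p₁ p₂ p₃ p₄ with
  | zero => exact .inl ⟨p₁, p₂, p₃, p₄, 0, hp, hα, hβ, le_rfl⟩
  | one =>
    by_cases h₁ : p₁ = 0
    · by_cases h₂ : p₂ = 0
      · by_cases h₃ : p₃ = 0
        · by_cases h₄ : p₄ = 0
          · exact .inr (by omega)
          · exact .inl ⟨0, 0, p₃ + 2, p₄ - 1, 0, by omega, by omega, by omega, le_rfl⟩
        · exact .inl ⟨0, 1, p₃ - 1, p₄ + 1, 0, by omega, by omega, by omega, le_rfl⟩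
      · exact .inl ⟨1, p₂ - 1, p₃ + 1, p₄, 0, by omega, by omega, by omega, le_rfl⟩
    · exact .inl ⟨p₁ - 1, p₂ + 2, p₃, p₄, 0, by omega, by omega, by omega, le_rfl⟩
  | more q ih _ => exact ih (p₁ + 1) p₂ p₃ (p₄ + 1) (by omega) (by omega) (by omega)

lemma six_mul_le_add (h : MemABCDPower p α β 0) : 6 * p ≤ α + β := by
  obtain ⟨p₁, p₂, p₃, p₄, q, hp, hα, hβ, hq⟩ := h
  omega

lemma five_mul_le_left (h : MemABCDPower p α β 0) (hβ : β ≤ 4) : 5 * p ≤ α := by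
  obtain ⟨p₁, p₂, p₃, p₄, q, hp, hα, hβ', hq⟩ := h
  obtain ⟨rfl, rfl, rfl⟩ : p₃ = 0 ∧ p₄ = 0 ∧ q = 0 := by omega
  omega

lemma five_mul_le_right (h : MemABCDPower p α β 0) (hα : α ≤ 4) : 5 * p ≤ β :=
  h.swap.five_mul_le_left hα

lemma one_four_add_single (v : Fin 4) :
    MemABCDPower 1 (4 + Finsupp.single v 1 0) (4 + Finsupp.single v 1 1)
      (Finsupp.single v 1 2 + Finsupp.single v 1 3) := by
  fin_cases v
  · exact ⟨0, 1, 0, 0, 0, by simp⟩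
  · exact ⟨0, 0, 1, 0, 0, by simp⟩
  · exact ⟨0, 0, 0, 0, 1, by simp⟩
  · exact ⟨0, 0, 0, 0, 1, by simp⟩

end MemABCDPower

section Combinatorics

variable {n : ℕ}

/-- Divisibility of the monomial with exponent `w` by the `xᵢ, yᵢ`-part of
`∏ (a⁴xᵢyᵢ²) ^ s i * (b⁴xᵢ²yᵢ) ^ t i`. -/
def XYDivides (s t : Fin n → ℕ) (w : Vars n →₀ ℕ) : Prop :=
  ∀ i, s i + 2 * t i ≤ w (.inr (.inl i)) ∧ 2 * s i + t i ≤ w (.inr (.inr i))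

lemma XYDivides.mono {s t : Fin n → ℕ} {w w' : Vars n →₀ ℕ} (h : XYDivides s t w)
    (hw : w ≤ w') : XYDivides s t w' :=
  fun i => ⟨(h i).1.trans (hw _), (h i).2.trans (hw _)⟩

lemma XYDivides.update {s t : Fin n → ℕ} {w : Vars n →₀ ℕ} (h : XYDivides s t w) {i : Fin n}
    {x y : ℕ} (hx : x + 2 * y ≤ w (.inr (.inl i))) (hy : 2 * x + y ≤ w (.inr (.inr i))) :
    XYDivides (Function.update s i x) (Function.update t i y) w := by
  intro j
  obtain rfl | hj := eq_or_ne j i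
  · simpa using ⟨hx, hy⟩
  · simpa [hj] using h j

variable (n) in
/-- The exponents of the monomials in the `k`-th power of the ideal: those divisible by
`∏ (a⁴xᵢyᵢ²) ^ s i * (b⁴xᵢ²yᵢ) ^ t i` times a product of `p` generators in `a, b, c, d` alone,
the latter using at most `a ^ α * b ^ β`. -/
def powerExponents (k : ℕ) : Set (Vars n →₀ ℕ) :=
  {w | ∃ (s t : Fin n → ℕ) (p α β : ℕ), XYDivides s t w ∧ p + ∑ i, s i + ∑ i, t i = k ∧
    α + 4 * ∑ i, s i ≤ w (.inl 0) ∧ β + 4 * ∑ i, t i ≤ w (.inl 1) ∧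
    MemABCDPower p α β (w (.inl 2) + w (.inl 3))}

lemma isUpperSet_powerExponents (k : ℕ) : IsUpperSet (powerExponents n k) := by
  rintro w w' hw ⟨s, t, p, α, β, hst, hk, ha, hb, h⟩
  exact ⟨s, t, p, α, β, hst.mono hw, hk, ha.trans (hw _), hb.trans (hw _),
    h.mono (add_le_add (hw _) (hw _))⟩

lemma zero_notMem_powerExponents {k : ℕ} (hk : k ≠ 0) : 0 ∉ powerExponents n k := by
  rintro ⟨s, t, p, α, β, -, h, ha, hb, p₁, p₂, p₃, p₄, q, hp, hα, hβ, -⟩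
  simp only [Finsupp.coe_zero, Pi.zero_apply] at ha hb
  omega

/-- Labels of the generators of the ideal: `a⁶, a⁵b, ab⁵, b⁶, a⁴b⁴c, a⁴b⁴d`, then `a⁴xᵢyᵢ²`, then
`b⁴xᵢ²yᵢ`. -/
abbrev GeneratorIndex (n : ℕ) : Type := Fin 6 ⊕ Fin n ⊕ Fin n

open Finsupp in
/-- The exponent vector of each generator of the ideal. -/
def generatorExponent : GeneratorIndex n → Vars n →₀ ℕ
  | .inl 0 => single (.inl 0) 6
  | .inl 1 => single (.inl 0) 5 + single (.inl 1) 1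
  | .inl 2 => single (.inl 0) 1 + single (.inl 1) 5
  | .inl 3 => single (.inl 1) 6
  | .inl 4 => single (.inl 0) 4 + single (.inl 1) 4 + single (.inl 2) 1
  | .inl 5 => single (.inl 0) 4 + single (.inl 1) 4 + single (.inl 3) 1
  | .inr (.inl i) => single (.inl 0) 4 + single (.inr (.inl i)) 1 + single (.inr (.inr i)) 2
  | .inr (.inr i) => single (.inl 1) 4 + single (.inr (.inl i)) 2 + single (.inr (.inr i)) 1

lemma linearCombination_generatorExponent_le_iff (c : GeneratorIndex n →₀ ℕ) (w : Vars n →₀ ℕ) :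
    Finsupp.linearCombination ℕ generatorExponent c ≤ w ↔
      6 * c (.inl 0) + 5 * c (.inl 1) + c (.inl 2) + 4 * c (.inl 4) + 4 * c (.inl 5) +
        4 * ∑ i, c (.inr (.inl i)) ≤ w (.inl 0) ∧
      c (.inl 1) + 5 * c (.inl 2) + 6 * c (.inl 3) + 4 * c (.inl 4) + 4 * c (.inl 5) +
        4 * ∑ i, c (.inr (.inr i)) ≤ w (.inl 1) ∧
      c (.inl 4) ≤ w (.inl 2) ∧ c (.inl 5) ≤ w (.inl 3) ∧
      XYDivides (fun i => c (.inr (.inl i))) (fun i => c (.inr (.inr i))) w := by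
  rw [Finsupp.linearCombination_apply, Finsupp.sum_fintype _ _ (by simp), Finsupp.le_def]
  simp only [Sum.forall, Fin.forall_fin_succ, Fintype.sum_sum_type, Fin.sum_univ_succ,
    Finsupp.add_apply, Finsupp.finsetSum_apply, Finsupp.smul_apply, smul_eq_mul]
  simp [generatorExponent, XYDivides, forall_and, Finsupp.single_apply, Finset.mul_sum, mul_comm,
    and_assoc, add_assoc]

lemma mem_powerExponents_iff {k : ℕ} {w : Vars n →₀ ℕ} :
    w ∈ powerExponents n k ↔ ∃ c : GeneratorIndex n →₀ ℕ, c.degree = k ∧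
      Finsupp.linearCombination ℕ generatorExponent c ≤ w := by
  simp only [linearCombination_generatorExponent_le_iff, Finsupp.degree_eq_sum,
    Fintype.sum_sum_type, Fin.sum_univ_six]
  constructor
  · rintro ⟨s, t, p, α, β, hst, hk, ha, hb, p₁, p₂, p₃, p₄, q, hp, hα, hβ, hq⟩
    refine ⟨Finsupp.equivFunOnFinite.symm
      (Sum.elim ![p₁, p₂, p₃, p₄, min q (w (.inl 2)), q - w (.inl 2)] (Sum.elim s t)), ?_, ?_⟩
    · simp
      omega
    · simp [hst]
      omega
  · rintro ⟨c, hk, ha, hb, hc, hd, hst⟩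
    exact ⟨_, _, c (.inl 0) + c (.inl 1) + c (.inl 2) + c (.inl 3) + (c (.inl 4) + c (.inl 5)),
      _, _, hst, by omega, ha, hb, c (.inl 0), c (.inl 1), c (.inl 2), c (.inl 3),
      c (.inl 4) + c (.inl 5), rfl, by omega, by omega, by omega⟩

lemma mem_powerExponents_of_sum_lt {k : ℕ} {w : Vars n →₀ ℕ} {s t : Fin n → ℕ}
    (hst : XYDivides s t w) (hlt : ∑ i, s i < ∑ i, t i) (hk : ∑ i, s i + ∑ i, t i + 1 = k)
    (ha : 4 + 4 * ∑ i, s i ≤ w (.inl 0)) (hb : 4 + 4 * ∑ i, t i ≤ w (.inl 1))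
    (hx : ∀ i, ∃ N, w + Finsupp.single (.inr (.inl i)) N ∈ powerExponents n k) :
    w ∈ powerExponents n k := by
  obtain ⟨i, -, hi⟩ := Finset.exists_lt_of_sum_lt hlt
  obtain ⟨hxi, hyi⟩ := hst i
  by_cases hti : 2 ≤ t i
  · -- `(b⁴xᵢ²yᵢ)² · a⁴b⁴ = (a⁴xᵢyᵢ²) · (b⁶)² · xᵢ³`
    have hs := sum_update_add s i (s i + 1)
    have ht := sum_update_add t i (t i - 2)
    exact ⟨_, _, 2, 0, 12, hst.update (i := i) (x := s i + 1) (y := t i - 2) (by omega) (by omega),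
      by omega, by omega, by omega, .of_six_mul_le_right le_rfl⟩
  by_cases hyi' : 2 ≤ w (.inr (.inr i))
  · -- `b⁴xᵢ²yᵢ · a⁴b⁴ · yᵢ = (a⁴xᵢyᵢ²) · b⁶ · b²xᵢ`
    have hs := sum_update_add s i 1
    have ht := sum_update_add t i 0
    exact ⟨_, _, 1, 0, 6, hst.update (i := i) (x := 1) (y := 0) (by omega) (by omega),
      by omega, by omega, by omega, .of_six_mul_le_right le_rfl⟩
  -- Here `yᵢ` has exponent at most one, so `xᵢ²` is all that a product of generators can use.
  obtain ⟨N, s', t', p, α, β, hst', hk', ha', hb', h⟩ := hx i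
  refine ⟨s', t', p, α, β, fun j => ?_, hk', by simpa using ha', by simpa using hb',
    by simpa using h⟩
  have hj := hst' j
  obtain rfl | hne := eq_or_ne j i
  · simp at hj
    omega
  · simpa [hne.symm] using hj

variable (n) in
/-- The symmetry of the ideal that exchanges `a` with `b` and each `xᵢ` with `yᵢ`. -/
def swapVars : Equiv.Perm (Vars n) :=
  (Equiv.swap 0 1).sumCongr (Equiv.sumComm (Fin n) (Fin n))

lemma XYDivides.mapDomain_swapVars {s t : Fin n → ℕ} {w : Vars n →₀ ℕ} (h : XYDivides s t w) :
    XYDivides t s (w.mapDomain (swapVars n)) :=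
  fun i => ⟨by simpa [swapVars, Finsupp.mapDomain_equiv_apply, add_comm] using (h i).2,
    by simpa [swapVars, Finsupp.mapDomain_equiv_apply, add_comm] using (h i).1⟩

lemma mapDomain_swapVars_mem_powerExponents {k : ℕ} {w : Vars n →₀ ℕ}
    (h : w ∈ powerExponents n k) : w.mapDomain (swapVars n) ∈ powerExponents n k := by
  obtain ⟨s, t, p, α, β, hst, hk, ha, hb, h⟩ := h
  refine ⟨t, s, p, β, α, hst.mapDomain_swapVars, by omega, ?_, ?_, ?_⟩
  · simpa [swapVars, Finsupp.mapDomain_equiv_apply] using hb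
  · simpa [swapVars, Finsupp.mapDomain_equiv_apply] using ha
  · simpa [swapVars, Finsupp.mapDomain_equiv_apply, Equiv.swap_apply_def] using h.swap

lemma mapDomain_swapVars_mapDomain_swapVars (w : Vars n →₀ ℕ) :
    (w.mapDomain (swapVars n)).mapDomain (swapVars n) = w := by
  ext v
  rw [Finsupp.mapDomain_equiv_apply, Finsupp.mapDomain_equiv_apply]
  rcases v with v | v | v <;> simp [swapVars]

lemma mem_powerExponents_of_saturated {k : ℕ} (hk : Even k) {w : Vars n →₀ ℕ}
    (hc : ∃ N, w + Finsupp.single (.inl 2) N ∈ powerExponents n k)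
    (hxy : ∀ i, ∃ N, w + Finsupp.single (.inr i) N ∈ powerExponents n k) :
    w ∈ powerExponents n k := by
  obtain ⟨N, s, t, p, α, β, hst, hsum, ha, hb, h⟩ := hc
  replace hst : XYDivides s t w := fun i => by simpa using hst i
  simp only [Finsupp.add_apply, Finsupp.single_apply, Sum.inl.injEq, Fin.reduceEq, if_false,
    add_zero] at ha hb
  obtain h | ⟨rfl, hα, hβ⟩ := h.zero_or_eq_one
  · exact ⟨s, t, p, α, β, hst, hsum, ha, hb, h.mono (zero_le)⟩
  obtain ⟨m, hm⟩ := hk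
  have hne : ∑ i, s i ≠ ∑ i, t i := by omega
  obtain hlt | hlt := hne.lt_or_gt
  · exact mem_powerExponents_of_sum_lt hst hlt (by omega) (by omega) (by omega)
      fun i => hxy (.inl i)
  · have hswap : w.mapDomain (swapVars n) ∈ powerExponents n k := by
      refine mem_powerExponents_of_sum_lt hst.mapDomain_swapVars hlt (by omega) ?_ ?_ fun i => ?_
      · simpa [swapVars, Finsupp.mapDomain_equiv_apply] using (by omega : _ ≤ w (.inl 1))
      · simpa [swapVars, Finsupp.mapDomain_equiv_apply] using (by omega : _ ≤ w (.inl 0))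
      · obtain ⟨N, hN⟩ := hxy (.inr i)
        exact ⟨N, by simpa [Finsupp.mapDomain_add, swapVars] using
          mapDomain_swapVars_mem_powerExponents hN⟩
    simpa [mapDomain_swapVars_mapDomain_swapVars] using
      mapDomain_swapVars_mem_powerExponents hswap

lemma sum_ite_lt (j : Fin n) : ∑ i, (if i < j then 1 else 0) = (j : ℕ) := by
  simp [← Fin.card_Iio, Finset.filter_gt_eq_Iio]

lemma sum_ite_le (j : Fin n) : ∑ i, (if i ≤ j then 1 else 0) = (j : ℕ) + 1 := by
  simp [← Fin.card_Iic, Finset.filter_ge_eq_Iic]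

/-- The exponent of `a ^ (4j + 8) * b ^ (4j + 4) * ∏_{i < j} (xᵢyᵢ)³ * ∏_{i ≥ j} xᵢyᵢ` with `j`
counted from `0`. Multiplied by `yⱼ`, it is the monomial that every variable other than `yⱼ` carries
into the power `2 * (j + 1)` of the ideal. -/
def witnessExponent (j : Fin n) : Vars n →₀ ℕ :=
  Finsupp.equivFunOnFinite.symm fun
    | .inl v => ![4 * (j : ℕ) + 8, 4 * j + 4, 0, 0] v
    | .inr (.inl i) => if i < j then 3 else 1
    | .inr (.inr i) => if i < j then 3 else 1

lemma witnessExponent_add_single_y_notMem (j : Fin n) :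
    witnessExponent j + Finsupp.single (.inr (.inr j)) 1 ∉ powerExponents n (2 * (j + 1)) := by
  rintro ⟨s, t, p, α, β, hst, hk, ha, hb, h⟩
  replace ha : α + 4 * ∑ i, s i ≤ 4 * j + 8 := by simpa [witnessExponent] using ha
  replace hb : β + 4 * ∑ i, t i ≤ 4 * j + 4 := by simpa [witnessExponent] using hb
  replace h : MemABCDPower p α β 0 := by simpa [witnessExponent] using h
  replace hst (i : Fin n) : s i + 2 * t i ≤ (if i < j then 3 else 1) ∧
      2 * s i + t i ≤ (if i < j then 3 else 1) + if i = j then 1 else 0 := by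
    simpa [witnessExponent, Finsupp.single_apply, eq_comm] using hst i
  have hs : ∑ i, s i ≤ j + 1 := by
    rw [← sum_ite_le j]
    exact Finset.sum_le_sum fun i _ => by grind
  have ht : ∑ i, t i ≤ j := by
    rw [← sum_ite_lt j]
    exact Finset.sum_le_sum fun i _ => by grind
  have hα := h.five_mul_le_left
  have hβ := h.five_mul_le_right
  have hαβ := h.six_mul_le_add
  omega

lemma witnessExponent_add_single_c_notMem (j : Fin n) :
    witnessExponent j + Finsupp.single (.inl 2) 1 ∉ powerExponents n (2 * (j + 1)) := by
  rintro ⟨s, t, p, α, β, hst, hk, ha, hb, h⟩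
  replace ha : α + 4 * ∑ i, s i ≤ 4 * j + 8 := by simpa [witnessExponent] using ha
  replace hb : β + 4 * ∑ i, t i ≤ 4 * j + 4 := by simpa [witnessExponent] using hb
  replace hst (i : Fin n) : s i + 2 * t i ≤ (if i < j then 3 else 1) ∧
      2 * s i + t i ≤ if i < j then 3 else 1 := by
    simpa [witnessExponent] using hst i
  have hs : ∑ i, s i ≤ j := by
    rw [← sum_ite_lt j]
    exact Finset.sum_le_sum fun i _ => by grind
  have ht : ∑ i, t i ≤ j := by
    rw [← sum_ite_lt j]
    exact Finset.sum_le_sum fun i _ => by grind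
  obtain h | ⟨rfl, -⟩ := h.zero_or_eq_one
  · have hα := h.five_mul_le_left
    have hαβ := h.six_mul_le_add
    omega
  · omega

lemma xyDivides_witnessExponent_add_single_y (j : Fin n) :
    XYDivides (fun i => if i ≤ j then 1 else 0) (fun i => if i < j then 1 else 0)
      (witnessExponent j + Finsupp.single (.inr (.inr j)) 1) := by
  intro i
  obtain h | rfl | h := lt_trichotomy i j
  · simp [witnessExponent, h, h.le, h.ne']
  · simp [witnessExponent]
  · simp [witnessExponent, h.not_gt, h.not_ge]

lemma witnessExponent_add_single_y_add_single_inl_mem (j : Fin n) (v : Fin 4) :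
    witnessExponent j + Finsupp.single (.inr (.inr j)) 1 + Finsupp.single (.inl v) 1 ∈
      powerExponents n (2 * (j + 1)) := by
  have hst := (xyDivides_witnessExponent_add_single_y j).mono
    (le_self_add (b := Finsupp.single (.inl v) 1))
  refine ⟨_, _, 1, _, _, hst, ?_, ?_, ?_, (MemABCDPower.one_four_add_single v).mono ?_⟩
  · rw [sum_ite_le, sum_ite_lt]
    omega
  · rw [sum_ite_le]
    simp [witnessExponent, Finsupp.single_apply]
    omega
  · rw [sum_ite_lt]
    simp [witnessExponent, Finsupp.single_apply]
    omega
  · simp [witnessExponent, Finsupp.single_apply]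

lemma witnessExponent_add_single_y_add_single_x_mem (i j : Fin n) :
    witnessExponent j + Finsupp.single (.inr (.inr j)) 1 + Finsupp.single (.inr (.inl i)) 1 ∈
      powerExponents n (2 * (j + 1)) := by
  have hst := (xyDivides_witnessExponent_add_single_y j).mono
    (le_self_add (b := Finsupp.single (.inr (.inl i)) 1))
  have hs := sum_update_add (fun i => if i ≤ j then 1 else 0) i 0
  have ht := sum_update_add (fun i => if i < j then 1 else 0) i ((if i < j then 1 else 0) + 1)
  rw [sum_ite_le] at hs
  rw [sum_ite_lt] at ht
  refine ⟨_, _, if i ≤ j then 1 else 0, 4 + if i ≤ j then 4 else 0, 0,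
    hst.update (i := i) (x := 0) (y := (if i < j then 1 else 0) + 1) ?_ ?_, by grind, ?_, ?_,
    .of_six_mul_le_left (by grind)⟩
  all_goals simp [witnessExponent]
  all_goals grind

lemma witnessExponent_add_single_y_add_single_y_mem {i j : Fin n} (hij : i ≠ j) :
    witnessExponent j + Finsupp.single (.inr (.inr j)) 1 + Finsupp.single (.inr (.inr i)) 1 ∈
      powerExponents n (2 * (j + 1)) := by
  have hst := (xyDivides_witnessExponent_add_single_y j).mono
    (le_self_add (b := Finsupp.single (.inr (.inr i)) 1))
  have hs := sum_update_add (fun i => if i ≤ j then 1 else 0) i ((if i ≤ j then 1 else 0) + 1)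
  have ht := sum_update_add (fun i => if i < j then 1 else 0) i 0
  rw [sum_ite_le] at hs
  rw [sum_ite_lt] at ht
  refine ⟨_, _, if i < j then 1 else 0, 0, 4 + if i < j then 4 else 0,
    hst.update (i := i) (x := (if i ≤ j then 1 else 0) + 1) (y := 0) ?_ ?_, by grind, ?_, ?_,
    .of_six_mul_le_right (by grind)⟩
  all_goals simp [witnessExponent]
  all_goals grind

lemma witnessExponent_add_single_y_add_single_mem (j : Fin n) {v : Vars n}
    (hv : v ≠ .inr (.inr j)) :
    witnessExponent j + Finsupp.single (.inr (.inr j)) 1 + Finsupp.single v 1 ∈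
      powerExponents n (2 * (j + 1)) := by
  rcases v with v | i | i
  · exact witnessExponent_add_single_y_add_single_inl_mem j v
  · exact witnessExponent_add_single_y_add_single_x_mem i j
  · exact witnessExponent_add_single_y_add_single_y_mem (by simpa using hv)

end Combinatorics

lemma idealI_eq_span_range_generator (K : Type*) [Field K] (n : ℕ) :
    idealI K n = Ideal.span (Set.range fun g : GeneratorIndex n =>
      monomial (generatorExponent g) (1 : K)) := by
  rw [idealI]
  congr 1
  ext f
  simp only [Set.mem_union, Set.mem_insert_iff, Set.mem_singleton_iff, Set.mem_range,
    Sum.exists, Fin.exists_fin_succ]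
  simp [va, vb, vc, vd, vx, vy, X, monomial_pow, monomial_mul, generatorExponent, eq_comm,
    or_assoc]

theorem depth_eq_one_of_even_general {R : Type*} [CommRing R] [Nontrivial R] {n k : ℕ}
    (heven : Even k) (h1 : 2 ≤ k) (h2 : k ≤ 2 * n) :
    depthWrt (idealOfVars (Vars n) R) (MvPolynomial (Vars n) R ⧸
      Ideal.span (Set.range fun g : GeneratorIndex n =>
        monomial (generatorExponent g) (1 : R)) ^ k) = 1 := by
  rw [span_range_monomial_pow_eq_restrictSupportIdeal generatorExponent k
    (isUpperSet_powerExponents k) fun _ => mem_powerExponents_iff]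
  apply le_antisymm
  · obtain ⟨j, rfl⟩ : ∃ j : Fin n, k = 2 * (j + 1) := by
      obtain ⟨m, rfl⟩ := heven
      exact ⟨⟨m - 1, by omega⟩, by simp only; omega⟩
    exact depthWrt_restrictSupportIdeal_le_one _ (witnessExponent_add_single_y_notMem j)
      (fun v hv => witnessExponent_add_single_y_add_single_mem j hv) (by simp)
      (witnessExponent_add_single_c_notMem j)
  · refine one_le_depthWrt (sum_mem fun v _ => Ideal.subset_span ⟨v, rfl⟩)
      (isSMulRegular_sum_X _ (insert (.inl 2) (Finset.univ.map .inr)) fun w hw => ?_)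
      (smul_top_quotient_ne_top (restrictSupportIdeal_le_idealOfVars
        (zero_notMem_powerExponents (by omega))) idealOfVars_ne_top)
    exact mem_powerExponents_of_saturated heven (hw _ (by simp)) fun i => hw _ (by simp)

/-- For every even integer `k` with `2 ≤ k ≤ 2n`, the depth of `S/Iᵏ` equals `1`. -/
theorem depth_eq_one_of_even (k : ℕ) (heven : Even k) (h1 : 2 ≤ k) (h2 : k ≤ 2 * n) :
    depthWrt (mMax K n) (MvPolynomial (Vars n) K ⧸ (idealI K n) ^ k) = 1 := by
  rw [idealI_eq_span_range_generator]
  exact depth_eq_one_of_even_general heven h1 h2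
end
end

section
/- For every integer k > 2n+1, the depth of S/I^k is equal to 2. -/
open MvPolynomial

noncomputable section

variable (K : Type*) [Field K] (n : ℕ)

/-!
By Rees' theorem all maximal regular sequences in an ideal `J` have the same length, so a regular
sequence in `J` is as long as the depth once some nonzero element of `M / (rs)M` is annihilated
by `J`.

Let `L` be generated by the generators of `I` that do not involve `c` and `d`, and `q = a⁴b⁴`, so
that `L ⊆ I ⊆ L + (q)` with `q² ∈ L²`. Moreover `q g ∈ L²` for each generator `g` of `L` in `a`
and `b` alone, and `q h² ∈ L³` for each of the other `2n` generators `h`. A product of more than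
`2n` generators of `L` contains some such `g` or repeats some `h`, so `q Lʳ ⊆ Lʳ⁺¹` for `r > 2n`,
whence `Iᵏ = Lᵏ` for `k > 2n + 1`.

Since `L` does not involve `c` and `d`, these form a regular sequence on `S / Lᵏ`. Modulo `(c, d)`
every variable annihilates the class of `u = a^(6k-2n-6) b⁵ ∏ᵢ xᵢ² yᵢ³`. This class is nonzero: the
weight `α + β + 2 ∑ᵢ ⌊(ξᵢ + ηᵢ) / 3⌋` of `a^α b^β ∏ᵢ xᵢ^ξᵢ yᵢ^ηᵢ` is superadditive and at least `6`
on the generators of `L`, hence at least `6k` on monomials of `Lᵏ`, but it is `6k - 1` on `u`.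
-/

section Depth

open RingTheory.Sequence CategoryTheory Abelian Pointwise

universe u v

variable {R : Type u} [CommRing R] {M : Type v} [AddCommGroup M] [Module R M] {J : Ideal R}

theorem smul_top_quotSMulTop_lt_top {r : R} (hr : r ∈ J) (hJ : J • (⊤ : Submodule R M) < ⊤) :
    J • (⊤ : Submodule R (QuotSMulTop r M)) < ⊤ := by
  refine lt_top_iff_ne_top.2 fun h => hJ.ne ?_
  have hcomap := congrArg (Submodule.comap (r • (⊤ : Submodule R M)).mkQ) h
  rw [Submodule.comap_smul_top_of_surjective J _ (Submodule.mkQ_surjective _),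
    Submodule.ker_mkQ, Submodule.comap_top, ← Submodule.ideal_span_singleton_smul] at hcomap
  rwa [sup_eq_left.2 (Submodule.smul_mono_left ((Ideal.span_singleton_le_iff_mem J).2 hr))]
    at hcomap

variable [Small.{v} R] [IsNoetherianRing R] [Module.Finite R M]

theorem exists_isRegular_quotSMulTop (hJ : J • (⊤ : Submodule R M) < ⊤) {r : R} (hr : r ∈ J)
    (hreg : IsSMulRegular M r) {rs : List R} (hrsJ : ∀ s ∈ rs, s ∈ J) (hrs : IsRegular M rs)
    {k : ℕ} (hk : rs.length = k + 1) :
    ∃ ts : List R, ts.length = k ∧ (∀ s ∈ ts, s ∈ J) ∧ IsRegular (QuotSMulTop r M) ts := by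
  -- Regular sequences of length `k` in `J` exist iff `Ext i (R ⧸ J) M` vanishes for all `i < k`,
  -- and `Ext i (R ⧸ J) (M ⧸ rM)` lies between `Ext i (R ⧸ J) M` and `Ext (i + 1) (R ⧸ J) M`.
  have rees := (ModuleCat.exists_isRegular_tfae J (k + 1) (ModuleCat.of R M) hJ).out 1 3
  have reesQuot := (ModuleCat.exists_isRegular_tfae J k (ModuleCat.of R (QuotSMulTop r M))
    (smul_top_quotSMulTop_lt_top hr hJ)).out 1 3
  have hext := rees.2 ⟨rs, hk, hrsJ, hrs⟩
  refine reesQuot.1 fun i hi => ?_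
  have hi₀ := AddCommGrpCat.isZero_of_iff_subsingleton.mpr (hext i (by omega))
  have hi₁ := AddCommGrpCat.isZero_of_iff_subsingleton.mpr (hext (i + 1) (by omega))
  exact AddCommGrpCat.subsingleton_of_isZero <| ShortComplex.Exact.isZero_of_both_zeros
    (Ext.covariant_sequence_exact₃' _ (hreg.smulShortComplex_shortExact (M := ModuleCat.of R M))
      i (i + 1) rfl) (hi₀.eq_zero_of_src _) (hi₁.eq_zero_of_tgt _)

theorem exists_isRegular_append {rs rs' : List R} (hJ : J • (⊤ : Submodule R M) < ⊤)
    (hrsJ : ∀ r ∈ rs, r ∈ J) (hrs : IsRegular M rs) (hrsJ' : ∀ r ∈ rs', r ∈ J)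
    (hrs' : IsRegular M rs') (hle : rs.length ≤ rs'.length) :
    ∃ ts : List R, (rs ++ ts).length = rs'.length ∧ (∀ r ∈ ts, r ∈ J) ∧
      IsRegular M (rs ++ ts) := by
  induction rs generalizing M rs' with
  | nil => exact ⟨rs', rfl, hrsJ', hrs'⟩
  | cons r rs ih =>
    obtain ⟨hr, hrs⟩ := (isRegular_cons_iff M r rs).1 hrs
    rw [List.forall_mem_cons] at hrsJ
    obtain ⟨k, hk⟩ := Nat.exists_eq_add_of_lt (Nat.lt_of_succ_le hle)
    obtain ⟨qs, hqs, hqsJ, hqsreg⟩ :=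
      exists_isRegular_quotSMulTop hJ hrsJ.1 hr hrsJ' hrs' (k := rs.length + k) hk
    obtain ⟨ts, hlen, htsJ, hts⟩ := ih (smul_top_quotSMulTop_lt_top hrsJ.1 hJ) hrsJ.2 hrs hqsJ
      hqsreg (by omega)
    exact ⟨ts, by simp only [List.cons_append, List.length_cons]; omega, htsJ,
      (isRegular_cons_iff M r _).2 ⟨hr, hts⟩⟩

theorem depthWrt_eq_length_of_le_colon {rs : List R} (hrsJ : ∀ r ∈ rs, r ∈ J)
    (hrs : IsWeaklyRegular M rs) {u : M} (hu : u ∉ Ideal.ofList rs • (⊤ : Submodule R M))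
    (hJu : J ≤ (Ideal.ofList rs • (⊤ : Submodule R M)).colon {u}) :
    depthWrt J M = rs.length := by
  have hle : Ideal.ofList rs • (⊤ : Submodule R M) ≤ J • ⊤ :=
    Submodule.smul_mono_left (Ideal.span_le.2 hrsJ)
  have hJ : J • (⊤ : Submodule R M) < ⊤ := by
    refine lt_top_iff_ne_top.2 fun h => hu ?_
    obtain ⟨r, hrJ, hr⟩ := Submodule.exists_mem_and_smul_eq_self_of_fg_of_le_smul J ⊤
      Module.Finite.fg_top h.ge
    exact hr u trivial ▸ Submodule.mem_colon_singleton.1 (hJu hrJ)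
  have hreg : IsRegular M rs := ⟨hrs, fun h => (h.le.trans hle).not_gt hJ⟩
  refine le_antisymm (sSup_le ?_) (le_sSup ⟨rs, rfl, hrsJ, hreg⟩)
  rintro _ ⟨rs', rfl, hrsJ', hrs'⟩
  by_contra! hlt
  have hlen : rs.length < rs'.length := by exact_mod_cast hlt
  obtain ⟨ts, hts, htsJ, htsreg⟩ := exists_isRegular_append hJ hrsJ hreg hrsJ' hrs' hlen.le
  obtain ⟨f, ts, rfl⟩ := List.exists_cons_of_ne_nil (l := ts) (by
    rintro rfl; rw [List.append_nil] at hts; omega)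
  have hf := ((isWeaklyRegular_cons_iff _ f ts).1
    ((isWeaklyRegular_append_iff M rs (f :: ts)).1 htsreg.toIsWeaklyRegular).2).1
  exact hu ((isSMulRegular_quotient_iff_mem_of_smul_mem _ f).1 hf u
    (Submodule.mem_colon_singleton.1 (hJu (htsJ f List.mem_cons_self))))

end Depth

section PowersOfIdeals

open Pointwise

theorem mkQ_mem_smul_top_iff {R : Type*} [CommRing R] {I J : Ideal R} {r : R} :
    I.mkQ r ∈ J • (⊤ : Submodule R (R ⧸ I)) ↔ r ∈ J ⊔ I := by
  rw [← Submodule.mem_comap, Submodule.comap_smul_top_of_surjective J _ I.mkQ_surjective,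
    Submodule.ker_mkQ, Ideal.smul_top_eq_map, Algebra.algebraMap_self, Ideal.map_id,
    Submodule.restrictScalars_self]

variable {R : Type*} [CommSemiring R]

theorem sup_pow_succ_le {L Q : Ideal R} (hQ : Q * Q ≤ L ^ 2) (r : ℕ) :
    (L ⊔ Q) ^ (r + 1) ≤ L ^ (r + 1) ⊔ Q * L ^ r := by
  induction r with
  | zero => simp
  | succ r ih =>
    have hQQ : Q * L ^ r * Q ≤ L ^ (r + 2) := calc
      Q * L ^ r * Q = Q * Q * L ^ r := mul_right_comm _ _ _
      _ ≤ L ^ 2 * L ^ r := Ideal.mul_mono_left hQ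
      _ = L ^ (r + 2) := by rw [← pow_add, add_comm]
    calc (L ⊔ Q) ^ (r + 2) ≤ (L ^ (r + 1) ⊔ Q * L ^ r) * (L ⊔ Q) := by
          rw [pow_succ]; exact Ideal.mul_mono_left ih
      _ = L ^ (r + 2) ⊔ Q * L ^ (r + 1) ⊔ (Q * L ^ (r + 1) ⊔ Q * L ^ r * Q) := by
          rw [Ideal.sup_mul, Ideal.mul_sup, Ideal.mul_sup, mul_assoc Q, ← pow_succ, ← pow_succ,
            mul_comm _ Q]
      _ ≤ L ^ (r + 2) ⊔ Q * L ^ (r + 1) :=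
          sup_le le_rfl (sup_le le_sup_right (hQQ.trans le_sup_left))

theorem sup_pow_succ_eq {L Q : Ideal R} (hQ : Q * Q ≤ L ^ 2) {r : ℕ}
    (hr : Q * L ^ r ≤ L ^ (r + 1)) : (L ⊔ Q) ^ (r + 1) = L ^ (r + 1) :=
  le_antisymm ((sup_pow_succ_le hQ r).trans (sup_le le_rfl hr))
    (Ideal.pow_right_mono le_sup_left _)

theorem mem_sq_of_mul_dvd {L : Ideal R} {u v z : R} (hu : u ∈ L) (hv : v ∈ L) (h : u * v ∣ z) :
    z ∈ L ^ 2 :=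
  Ideal.mem_of_dvd _ h (pow_two L ▸ Ideal.mul_mem_mul hu hv)

theorem mem_cube_of_mul_dvd {L : Ideal R} {u v w z : R} (hu : u ∈ L) (hv : v ∈ L) (hw : w ∈ L)
    (h : u * v * w ∣ z) : z ∈ L ^ 3 :=
  Ideal.mem_of_dvd _ h <|
    pow_succ L 2 ▸ Ideal.mul_mem_mul (mem_sq_of_mul_dvd hu hv dvd_rfl) hw

theorem prod_mem_pow_card {ι : Type*} {L : Ideal R} {s : Finset ι} {f : ι → R}
    (hf : ∀ i ∈ s, f i ∈ L) : ∏ i ∈ s, f i ∈ L ^ s.card := by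
  simpa using Ideal.prod_mem_prod (I := fun _ => L) hf

theorem mul_prod_mem_pow_card_succ {ι : Type*} {L : Ideal R} {s t : Finset ι} (hts : t ⊆ s)
    {f : ι → R} (hf : ∀ i ∈ s, f i ∈ L) {q : R} (hq : q * ∏ i ∈ t, f i ∈ L ^ (t.card + 1)) :
    q * ∏ i ∈ s, f i ∈ L ^ (s.card + 1) := by
  classical
  have hrest : ∏ i ∈ s \ t, f i ∈ L ^ (s \ t).card :=
    prod_mem_pow_card fun i hi => hf i (Finset.sdiff_subset hi)
  rw [← Finset.prod_sdiff hts, mul_left_comm, ← Finset.card_sdiff_add_card_eq_card hts, add_assoc,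
    pow_add]
  exact Ideal.mul_mem_mul hrest hq

theorem span_singleton_mul_pow_le_pow_succ {ι : Type*} [Fintype ι] {G : Set R} {h : ι → R}
    {q : R} (hG : ∀ g ∈ G, q * g ∈ Ideal.span (G ∪ Set.range h) ^ 2)
    (hh : ∀ i, q * h i ^ 2 ∈ Ideal.span (G ∪ Set.range h) ^ 3) {r : ℕ}
    (hr : Fintype.card ι < r) :
    Ideal.span {q} * Ideal.span (G ∪ Set.range h) ^ r ≤
      Ideal.span (G ∪ Set.range h) ^ (r + 1) := by
  set L := Ideal.span (G ∪ Set.range h)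
  have hpow : L ^ r = Ideal.span ((G ∪ Set.range h) ^ r) := Submodule.span_pow _ _
  rw [hpow, Ideal.span_mul_span', Ideal.span_le]
  rintro _ ⟨q, rfl, _, hy, rfl⟩
  obtain ⟨f, rfl⟩ := Set.mem_pow.1 hy
  have hf : ∀ j ∈ Finset.univ, (f j : R) ∈ L := fun j _ => Ideal.subset_span (f j).2
  suffices ∃ t : Finset (Fin r), q * ∏ j ∈ t, (f j : R) ∈ L ^ (t.card + 1) by
    obtain ⟨t, ht⟩ := this
    simpa [List.prod_ofFn] using mul_prod_mem_pow_card_succ t.subset_univ hf ht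
  by_cases hGf : ∃ j, (f j : R) ∈ G
  · obtain ⟨j, hj⟩ := hGf
    exact ⟨{j}, by simpa using hG _ hj⟩
  · have hrange : ∀ j, ∃ i, h i = f j := fun j => (f j).2.resolve_left fun hj => hGf ⟨j, hj⟩
    choose i hi using hrange
    obtain ⟨j, j', hne, hij⟩ := Fintype.exists_ne_map_eq_of_card_lt i (by simpa using hr)
    refine ⟨{j, j'}, ?_⟩
    rw [Finset.prod_pair hne, Finset.card_pair hne, ← hi, ← hi, ← hij, ← pow_two]
    exact hh _

end PowersOfIdeals

section MonomialIdeals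

open Pointwise

variable {σ R : Type*}

theorem span_monomial_pow [CommSemiring R] (T : Set (σ →₀ ℕ)) (k : ℕ) :
    Ideal.span ((monomial · (1 : R)) '' T) ^ k = Ideal.span ((monomial · (1 : R)) '' (k • T)) := by
  induction k with
  | zero => simp [Ideal.one_eq_top]
  | succ k ih =>
    rw [pow_succ, ih, Ideal.span_mul_span', succ_nsmul]
    congr 1
    exact (Set.image_image2_distrib fun s t => by simp [monomial_mul]).symm

theorem mul_le_of_mem_nsmul {A : Type*} [AddMonoid A] {w : A → ℕ}
    (hw : ∀ s t, w s + w t ≤ w (s + t)) {T : Set A} {m : ℕ} (hT : ∀ t ∈ T, m ≤ w t) {k : ℕ}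
    {t : A} (ht : t ∈ k • T) : k * m ≤ w t := by
  induction k generalizing t with
  | zero => simp
  | succ k ih =>
    rw [succ_nsmul] at ht
    obtain ⟨s, hs, t, ht, rfl⟩ := ht
    calc (k + 1) * m = k * m + m := by ring
      _ ≤ w s + w t := add_le_add (ih hs) (hT t ht)
      _ ≤ w (s + t) := hw s t

theorem mem_span_X_sup_span_monomial [CommSemiring R] {V : Set σ} {T : Set (σ →₀ ℕ)}
    {f : MvPolynomial σ R} :
    f ∈ Ideal.span (X '' V) ⊔ Ideal.span ((monomial · (1 : R)) '' T) ↔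
      ∀ m ∈ f.support, (∃ v ∈ V, m v ≠ 0) ∨ ∃ t ∈ T, t ≤ m := by
  have hX : (X '' V : Set (MvPolynomial σ R)) =
      (monomial · (1 : R)) '' ((Finsupp.single · 1) '' V) := by
    rw [Set.image_image]; rfl
  rw [hX, ← Ideal.span_union, ← Set.image_union, mem_ideal_span_monomial_image]
  simp [or_and_right, exists_or, Nat.one_le_iff_ne_zero]

theorem mem_of_X_mul_mem_span_X_sup_span_monomial [CommSemiring R] {V : Set σ}
    {T : Set (σ →₀ ℕ)} {v : σ} (hV : v ∉ V) (hT : ∀ t ∈ T, t v = 0) {f : MvPolynomial σ R}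
    (hf : X v * f ∈ Ideal.span (X '' V) ⊔ Ideal.span ((monomial · (1 : R)) '' T)) :
    f ∈ Ideal.span (X '' V) ⊔ Ideal.span ((monomial · (1 : R)) '' T) := by
  classical
  rw [mem_span_X_sup_span_monomial] at hf ⊢
  intro m hm
  have hmv : Finsupp.single v 1 + m ∈ (X v * f).support := by
    simpa [coeff_X_mul] using hm
  refine (hf _ hmv).imp ?_ ?_
  · rintro ⟨w, hw, hne⟩
    have hwv : v ≠ w := by rintro rfl; exact hV hw
    exact ⟨w, hw, by simpa [Finsupp.single_apply, hwv] using hne⟩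
  · rintro ⟨t, ht, hle⟩
    refine ⟨t, ht, fun w => ?_⟩
    rcases eq_or_ne v w with rfl | hvw
    · simp [hT t ht]
    · simpa [Finsupp.single_apply, hvw] using hle w

theorem ofList_map_X [CommSemiring R] (vs : List σ) :
    Ideal.ofList (vs.map X) = Ideal.span (X '' {v | v ∈ vs} : Set (MvPolynomial σ R)) :=
  congrArg Ideal.span (Set.ext fun _ => List.mem_map)

theorem isWeaklyRegular_map_X [CommRing R] {vs : List σ} (hvs : vs.Nodup) {T : Set (σ →₀ ℕ)}
    (hT : ∀ t ∈ T, ∀ v ∈ vs, t v = 0) :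
    RingTheory.Sequence.IsWeaklyRegular
      (MvPolynomial σ R ⧸ Ideal.span ((monomial · (1 : R)) '' T)) (vs.map (X (R := R))) := by
  refine ⟨fun i hi => ?_⟩
  rw [List.length_map] at hi
  have hnew : vs[i] ∉ {v | v ∈ vs.take i} := by
    rintro hmem
    obtain ⟨j, hj, hji⟩ := List.mem_take_iff_getElem.1 hmem
    have := hvs.getElem_inj_iff.1 hji
    omega
  refine (isSMulRegular_quotient_iff_mem_of_smul_mem _ _).2 fun x hx => ?_
  obtain ⟨f, rfl⟩ := Submodule.mkQ_surjective _ x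
  rw [← map_smul, mkQ_mem_smul_top_iff, smul_eq_mul, ← List.map_take, ofList_map_X,
    List.getElem_map] at hx
  rw [mkQ_mem_smul_top_iff, ← List.map_take, ofList_map_X]
  exact mem_of_X_mul_mem_span_X_sup_span_monomial hnew
    (fun t ht => hT t ht _ (List.getElem_mem _)) hx

end MonomialIdeals

section Generators

/-- The pure generators of `I`, those in `a` and `b` alone. -/
def pureGens : Set (MvPolynomial (Vars n) K) :=
  {va K n ^ 6, va K n ^ 5 * vb K n, va K n * vb K n ^ 5, vb K n ^ 6}

/-- The mixed generators of `I`: `a⁴xᵢyᵢ²` in the first summand, `b⁴xᵢ²yᵢ` in the second. -/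
def mixedGen : Fin n ⊕ Fin n → MvPolynomial (Vars n) K :=
  Sum.elim (fun i => va K n ^ 4 * vx K n i * vy K n i ^ 2)
    (fun i => vb K n ^ 4 * vx K n i ^ 2 * vy K n i)

/-- The ideal generated by those generators of `I` that do not involve `c` and `d`. -/
def coreIdeal : Ideal (MvPolynomial (Vars n) K) :=
  Ideal.span (pureGens K n ∪ Set.range (mixedGen K n))

theorem va_pow_six_mem : va K n ^ 6 ∈ coreIdeal K n :=
  Ideal.subset_span (by simp [pureGens])

theorem va_pow_five_mul_vb_mem : va K n ^ 5 * vb K n ∈ coreIdeal K n :=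
  Ideal.subset_span (by simp [pureGens])

theorem va_mul_vb_pow_five_mem : va K n * vb K n ^ 5 ∈ coreIdeal K n :=
  Ideal.subset_span (by simp [pureGens])

theorem vb_pow_six_mem : vb K n ^ 6 ∈ coreIdeal K n :=
  Ideal.subset_span (by simp [pureGens])

theorem mixedGen_mem (s : Fin n ⊕ Fin n) : mixedGen K n s ∈ coreIdeal K n :=
  Ideal.subset_span (Or.inr ⟨s, rfl⟩)

theorem mul_pureGens_mem_sq {g : MvPolynomial (Vars n) K} (hg : g ∈ pureGens K n) :
    va K n ^ 4 * vb K n ^ 4 * g ∈ coreIdeal K n ^ 2 := by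
  have ha := va_pow_six_mem K n
  have hab := va_pow_five_mul_vb_mem K n
  have hba := va_mul_vb_pow_five_mem K n
  have hb := vb_pow_six_mem K n
  rcases hg with rfl | rfl | rfl | rfl
  · exact mem_sq_of_mul_dvd hab hab ⟨vb K n ^ 2, by ring⟩
  · exact mem_sq_of_mul_dvd ha hba ⟨va K n ^ 2, by ring⟩
  · exact mem_sq_of_mul_dvd hab hb ⟨vb K n ^ 2, by ring⟩
  · exact mem_sq_of_mul_dvd hba hba ⟨va K n ^ 2, by ring⟩

theorem mul_mixedGen_sq_mem_cube (s : Fin n ⊕ Fin n) :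
    va K n ^ 4 * vb K n ^ 4 * mixedGen K n s ^ 2 ∈ coreIdeal K n ^ 3 := by
  have ha := va_pow_six_mem K n
  have hb := vb_pow_six_mem K n
  rcases s with i | i
  · exact mem_cube_of_mul_dvd ha ha (mixedGen_mem K n (Sum.inr i))
      ⟨vy K n i ^ 3, by simp only [mixedGen, Sum.elim_inl, Sum.elim_inr]; ring⟩
  · exact mem_cube_of_mul_dvd hb hb (mixedGen_mem K n (Sum.inl i))
      ⟨vx K n i ^ 3, by simp only [mixedGen, Sum.elim_inl, Sum.elim_inr]; ring⟩

theorem coreIdeal_le_idealI : coreIdeal K n ≤ idealI K n := by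
  refine Ideal.span_mono ?_
  rintro g (hg | ⟨i | i, rfl⟩)
  · refine Or.inl (Or.inl ?_)
    rcases hg with h | h | h | h
    exacts [Or.inl h, Or.inr (Or.inl h), Or.inr (Or.inr (Or.inl h)),
      Or.inr (Or.inr (Or.inr (Or.inl h)))]
  · exact Or.inl (Or.inr ⟨i, rfl⟩)
  · exact Or.inr ⟨i, rfl⟩

theorem idealI_le_coreIdeal_sup :
    idealI K n ≤ coreIdeal K n ⊔ Ideal.span {va K n ^ 4 * vb K n ^ 4} := by
  have hq : va K n ^ 4 * vb K n ^ 4 ∈ coreIdeal K n ⊔ Ideal.span {va K n ^ 4 * vb K n ^ 4} :=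
    Ideal.mem_sup_right (Ideal.mem_span_singleton_self _)
  refine Ideal.span_le.2 ?_
  rintro g (((rfl | rfl | rfl | rfl | rfl | rfl) | ⟨i, rfl⟩) | ⟨i, rfl⟩)
  · exact Ideal.mem_sup_left (va_pow_six_mem K n)
  · exact Ideal.mem_sup_left (va_pow_five_mul_vb_mem K n)
  · exact Ideal.mem_sup_left (va_mul_vb_pow_five_mem K n)
  · exact Ideal.mem_sup_left (vb_pow_six_mem K n)
  · exact Ideal.mul_mem_right _ _ hq
  · exact Ideal.mul_mem_right _ _ hq
  · exact Ideal.mem_sup_left (mixedGen_mem K n (Sum.inl i))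
  · exact Ideal.mem_sup_left (mixedGen_mem K n (Sum.inr i))

theorem idealI_pow_eq_coreIdeal_pow {k : ℕ} (hk : 2 * n + 1 < k) :
    idealI K n ^ k = coreIdeal K n ^ k := by
  obtain ⟨r, rfl⟩ := Nat.exists_eq_add_one_of_ne_zero (Nat.ne_zero_of_lt hk)
  have hsq : Ideal.span {va K n ^ 4 * vb K n ^ 4} * Ideal.span {va K n ^ 4 * vb K n ^ 4} ≤
      coreIdeal K n ^ 2 := by
    rw [Ideal.span_singleton_mul_span_singleton, Ideal.span_singleton_le_iff_mem]
    exact mem_sq_of_mul_dvd (va_pow_six_mem K n) (vb_pow_six_mem K n)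
      ⟨va K n ^ 2 * vb K n ^ 2, by ring⟩
  have hmul : Ideal.span {va K n ^ 4 * vb K n ^ 4} * coreIdeal K n ^ r ≤
      coreIdeal K n ^ (r + 1) :=
    span_singleton_mul_pow_le_pow_succ (fun _ => mul_pureGens_mem_sq K n)
      (mul_mixedGen_sq_mem_cube K n) (by simp only [Fintype.card_sum, Fintype.card_fin]; omega)
  refine le_antisymm ?_ (Ideal.pow_right_mono (coreIdeal_le_idealI K n) _)
  exact (Ideal.pow_right_mono (idealI_le_coreIdeal_sup K n) _).trans
    (sup_pow_succ_eq hsq hmul).le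

end Generators

section Exponents

open Pointwise

/-- The weight `α + β + 2 ∑ᵢ ⌊(ξᵢ + ηᵢ) / 3⌋` of the exponent of `a^α b^β ∏ᵢ xᵢ^ξᵢ yᵢ^ηᵢ ⋯`, used to
bound from below the exponents occurring in powers of `coreIdeal`. -/
def floorWeight (t : Vars n →₀ ℕ) : ℕ :=
  t (Sum.inl 0) + t (Sum.inl 1) +
    2 * ∑ i : Fin n, (t (Sum.inr (Sum.inl i)) + t (Sum.inr (Sum.inr i))) / 3

theorem floorWeight_add_le (s t : Vars n →₀ ℕ) :
    floorWeight n s + floorWeight n t ≤ floorWeight n (s + t) := by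
  have hfloor : ∑ i : Fin n, (s (Sum.inr (Sum.inl i)) + s (Sum.inr (Sum.inr i))) / 3 +
      ∑ i : Fin n, (t (Sum.inr (Sum.inl i)) + t (Sum.inr (Sum.inr i))) / 3 ≤
      ∑ i : Fin n, ((s + t) (Sum.inr (Sum.inl i)) + (s + t) (Sum.inr (Sum.inr i))) / 3 := by
    rw [← Finset.sum_add_distrib]
    refine Finset.sum_le_sum fun i _ => ?_
    simp only [Finsupp.add_apply]
    omega
  simp only [floorWeight, Finsupp.add_apply] at hfloor ⊢
  omega

theorem floorWeight_mono : Monotone (floorWeight n) := by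
  intro s t hst
  obtain ⟨r, rfl⟩ := exists_add_of_le hst
  exact (Nat.le_add_right _ _).trans (floorWeight_add_le n s r)

theorem le_floorWeight (t : Vars n →₀ ℕ) (i : Fin n) :
    t (Sum.inl 0) + t (Sum.inl 1) +
      2 * ((t (Sum.inr (Sum.inl i)) + t (Sum.inr (Sum.inr i))) / 3) ≤ floorWeight n t := by
  have hle := Finset.single_le_sum
    (f := fun i : Fin n => (t (Sum.inr (Sum.inl i)) + t (Sum.inr (Sum.inr i))) / 3)
    (fun _ _ => Nat.zero_le _) (Finset.mem_univ i)
  exact Nat.add_le_add_left (Nat.mul_le_mul_left 2 hle) _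

/-- The list of the two variables `c`, `d`. -/
def cdVars : List (Vars n) := [Sum.inl 2, Sum.inl 3]

/-- The exponents of the generators of `coreIdeal`. -/
def genExponents : Set (Vars n →₀ ℕ) :=
  {t | monomial t (1 : K) ∈ pureGens K n ∪ Set.range (mixedGen K n)}

theorem exists_monomial_eq_of_mem_pureGens {g : MvPolynomial (Vars n) K} (hg : g ∈ pureGens K n) :
    ∃ t, monomial t 1 = g ∧ (∀ v ∈ cdVars n, t v = 0) ∧ 6 ≤ floorWeight n t := by
  obtain ⟨p, q, hpq, rfl⟩ : ∃ p q, 6 ≤ p + q ∧ va K n ^ p * vb K n ^ q = g := by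
    rcases hg with rfl | rfl | rfl | rfl
    exacts [⟨6, 0, by simp⟩, ⟨5, 1, by simp⟩, ⟨1, 5, by simp⟩, ⟨0, 6, by simp⟩]
  refine ⟨Finsupp.single (Sum.inl 0) p + Finsupp.single (Sum.inl 1) q, ?_, by simp [cdVars], ?_⟩
  · simp [va, vb, X_pow_eq_monomial, monomial_mul]
  · simpa [floorWeight] using hpq

theorem exists_monomial_eq_mixedGen (s : Fin n ⊕ Fin n) :
    ∃ t, monomial t 1 = mixedGen K n s ∧ (∀ v ∈ cdVars n, t v = 0) ∧ 6 ≤ floorWeight n t := by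
  rcases s with i | i
  · refine ⟨Finsupp.single (Sum.inl 0) 4 + Finsupp.single (Sum.inr (Sum.inl i)) 1 +
      Finsupp.single (Sum.inr (Sum.inr i)) 2, ?_, by simp [cdVars], ?_⟩
    · simp only [mixedGen, Sum.elim_inl, va, vx, vy, X_pow_eq_monomial]
      simp only [X, monomial_mul, one_mul]
    · exact le_trans (by simp) (le_floorWeight n _ i)
  · refine ⟨Finsupp.single (Sum.inl 1) 4 + Finsupp.single (Sum.inr (Sum.inl i)) 2 +
      Finsupp.single (Sum.inr (Sum.inr i)) 1, ?_, by simp [cdVars], ?_⟩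
    · simp only [mixedGen, Sum.elim_inr, vb, vx, vy, X_pow_eq_monomial]
      simp only [X, monomial_mul, one_mul]
    · exact le_trans (by simp) (le_floorWeight n _ i)

theorem exists_monomial_eq_of_mem_gens {g : MvPolynomial (Vars n) K}
    (hg : g ∈ pureGens K n ∪ Set.range (mixedGen K n)) :
    ∃ t, monomial t 1 = g ∧ (∀ v ∈ cdVars n, t v = 0) ∧ 6 ≤ floorWeight n t := by
  rcases hg with hg | ⟨s, rfl⟩
  exacts [exists_monomial_eq_of_mem_pureGens K n hg, exists_monomial_eq_mixedGen K n s]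

theorem genExponents_spec {t : Vars n →₀ ℕ} (ht : t ∈ genExponents K n) :
    (∀ v ∈ cdVars n, t v = 0) ∧ 6 ≤ floorWeight n t := by
  obtain ⟨s, hs, hspec⟩ := exists_monomial_eq_of_mem_gens K n ht
  rwa [← monomial_left_injective one_ne_zero hs]

theorem coreIdeal_pow_eq_span_monomial (k : ℕ) :
    coreIdeal K n ^ k = Ideal.span ((monomial · (1 : K)) '' (k • genExponents K n)) := by
  have hgens : (monomial · (1 : K)) '' genExponents K n =
      pureGens K n ∪ Set.range (mixedGen K n) := by
    refine Set.image_preimage_eq_of_subset fun g hg => ?_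
    obtain ⟨t, ht, -⟩ := exists_monomial_eq_of_mem_gens K n hg
    exact ⟨t, ht⟩
  rw [coreIdeal, ← hgens, span_monomial_pow]

theorem apply_eq_zero_of_mem_nsmul_genExponents {k : ℕ} {t : Vars n →₀ ℕ}
    (ht : t ∈ k • genExponents K n) {v : Vars n} (hv : v ∈ cdVars n) : t v = 0 := by
  have hsub : genExponents K n ⊆ AddMonoidHom.mker (Finsupp.applyAddHom (M := ℕ) v) :=
    fun s hs => (genExponents_spec K n hs).1 v hv
  exact AddSubmonoid.nsmul_subset hsub ht

theorem mul_six_le_floorWeight {k : ℕ} {t : Vars n →₀ ℕ} (ht : t ∈ k • genExponents K n) :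
    k * 6 ≤ floorWeight n t :=
  mul_le_of_mem_nsmul (floorWeight_add_le n) (fun _ hs => (genExponents_spec K n hs).2) ht

theorem isWeaklyRegular_map_X_cdVars (k : ℕ) :
    RingTheory.Sequence.IsWeaklyRegular (MvPolynomial (Vars n) K ⧸ coreIdeal K n ^ k)
      ((cdVars n).map (X (R := K))) := by
  rw [coreIdeal_pow_eq_span_monomial]
  exact isWeaklyRegular_map_X (by simp [cdVars])
    fun t ht v hv => apply_eq_zero_of_mem_nsmul_genExponents K n ht hv

end Exponents

section Socle

/-- The exponent of `a^(4n+6j+6) b⁵ ∏ᵢ xᵢ² yᵢ³`, a monomial that spans a socle element of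
`S / ((c, d) + coreIdeal ^ (n + 2 + j))`. -/
def socleExponent (j : ℕ) : Vars n →₀ ℕ :=
  Finsupp.equivFunOnFinite.symm
    (Sum.elim ![4 * n + 6 * j + 6, 5, 0, 0] (Sum.elim (fun _ => 2) (fun _ => 3)))

theorem monomial_socleExponent (j : ℕ) : monomial (socleExponent n j) (1 : K) =
    (∏ i, mixedGen K n (Sum.inl i)) * (∏ i, vx K n i * vy K n i) *
      (va K n ^ 6) ^ (j + 1) * vb K n ^ 5 := by
  rw [monomial_eq, Finsupp.prod_fintype _ _ (by simp), Fintype.prod_sum_type,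
    Fintype.prod_sum_type, Fin.prod_univ_four]
  simp only [socleExponent, mixedGen, Finsupp.equivFunOnFinite_symm_apply_apply, Sum.elim_inl,
    Sum.elim_inr, Finset.prod_mul_distrib, Finset.prod_const, Finset.card_univ, Fintype.card_fin,
    Finset.prod_pow, va, vb, vx, vy, Matrix.cons_val, C_1]
  ring

theorem prod_mixedGen_mul_mem {j r s : ℕ} (hrs : s + r = j + 2)
    {z y : MvPolynomial (Vars n) K} (hz : z ∈ coreIdeal K n ^ s)
    (hy : (∏ i, mixedGen K n (Sum.inl i)) * z * (va K n ^ 6) ^ r ∣ y) :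
    y ∈ coreIdeal K n ^ (n + 2 + j) := by
  have hprod : ∏ i, mixedGen K n (Sum.inl i) ∈ coreIdeal K n ^ n := by
    simpa using prod_mem_pow_card (s := Finset.univ) fun i _ => mixedGen_mem K n (Sum.inl i)
  rw [show n + 2 + j = n + s + r by omega, pow_add, pow_add]
  exact Ideal.mem_of_dvd _ hy
    (Ideal.mul_mem_mul (Ideal.mul_mem_mul hprod hz) (Ideal.pow_mem_pow (va_pow_six_mem K n) r))

theorem X_mul_monomial_socleExponent_mem (j : ℕ) {v : Vars n} (hv : v ∉ cdVars n) :
    X v * monomial (socleExponent n j) (1 : K) ∈ coreIdeal K n ^ (n + 2 + j) := by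
  classical
  have hba := va_mul_vb_pow_five_mem K n
  have hsplit (i : Fin n) : ∏ i, vx K n i * vy K n i =
      vx K n i * vy K n i * ∏ i ∈ Finset.univ.erase i, vx K n i * vy K n i :=
    (Finset.mul_prod_erase _ _ (Finset.mem_univ i)).symm
  rw [monomial_socleExponent]
  rcases v with v | i | i
  · fin_cases v
    · refine prod_mixedGen_mul_mem K n (r := j + 1) (s := 1) (by omega) (by simpa using hba)
        ⟨∏ i, vx K n i * vy K n i, ?_⟩
      change va K n * _ = _
      ring
    · refine prod_mixedGen_mul_mem K n (r := j + 1) (s := 1) (by omega)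
        (by simpa using vb_pow_six_mem K n) ⟨∏ i, vx K n i * vy K n i, ?_⟩
      change vb K n * _ = _
      ring
    · exact absurd (by simp [cdVars]) hv
    · exact absurd (by simp [cdVars]) hv
  · refine prod_mixedGen_mul_mem K n (r := j + 1) (s := 1) (by omega)
      (by simpa using mixedGen_mem K n (Sum.inr i))
      ⟨vb K n * ∏ i ∈ Finset.univ.erase i, vx K n i * vy K n i, ?_⟩
    change vx K n i * _ = _
    rw [hsplit i, mixedGen, Sum.elim_inr]
    ring
  · refine prod_mixedGen_mul_mem K n (r := j) (s := 2) (by omega)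
      (mem_sq_of_mul_dvd (mixedGen_mem K n (Sum.inl i)) hba dvd_rfl)
      ⟨va K n * ∏ i ∈ Finset.univ.erase i, vx K n i * vy K n i, ?_⟩
    change vy K n i * _ = _
    rw [hsplit i]
    simp only [mixedGen, Sum.elim_inl]
    ring

theorem monomial_socleExponent_notMem (j : ℕ) :
    monomial (socleExponent n j) (1 : K) ∉
      Ideal.span (X '' {v | v ∈ cdVars n}) ⊔ coreIdeal K n ^ (n + 2 + j) := by
  rw [coreIdeal_pow_eq_span_monomial, mem_span_X_sup_span_monomial]
  intro h
  rcases h (socleExponent n j) (by simp) with ⟨v, hv, hne⟩ | ⟨t, ht, hle⟩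
  · simp only [cdVars, Set.mem_ofPred_eq, List.mem_cons, List.not_mem_nil, or_false] at hv
    rcases hv with rfl | rfl <;> exact hne rfl
  · have hweight : floorWeight n (socleExponent n j) = 6 * (n + 2 + j) - 1 := by
      simp only [floorWeight, socleExponent, Finsupp.equivFunOnFinite_symm_apply_apply,
        Sum.elim_inl, Sum.elim_inr, Matrix.cons_val, Finset.sum_const, Finset.card_univ,
        Fintype.card_fin, smul_eq_mul]
      omega
    have hge := (mul_six_le_floorWeight K n ht).trans (floorWeight_mono n hle)
    omega

end Socle

/-- For every integer `k > 2n+1`, the depth of `S/Iᵏ` equals `2`. -/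
theorem depth_eq_two_of_large (k : ℕ) (hk : 2 * n + 1 < k) :
    depthWrt (mMax K n) (MvPolynomial (Vars n) K ⧸ (idealI K n) ^ k) = 2 := by
  rw [idealI_pow_eq_coreIdeal_pow K n hk]
  obtain ⟨j, rfl⟩ : ∃ j, k = n + 2 + j := ⟨k - n - 2, by omega⟩
  refine depthWrt_eq_length_of_le_colon ?_ (isWeaklyRegular_map_X_cdVars K n _)
    (u := Submodule.mkQ _ (monomial (socleExponent n j) 1)) ?_ (Ideal.span_le.2 ?_)
  · exact List.forall_mem_map.2 fun v _ => Ideal.subset_span ⟨v, rfl⟩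
  · rw [mkQ_mem_smul_top_iff, ofList_map_X]
    exact monomial_socleExponent_notMem K n j
  · rintro _ ⟨v, rfl⟩
    rw [SetLike.mem_coe, Submodule.mem_colon_singleton, ← map_smul, mkQ_mem_smul_top_iff,
      smul_eq_mul, ofList_map_X]
    by_cases hv : v ∈ cdVars n
    · exact Ideal.mem_sup_left (Ideal.mul_mem_right _ _ (Ideal.subset_span ⟨v, hv, rfl⟩))
    · exact Ideal.mem_sup_right (X_mul_monomial_socleExponent_mem K n j hv)
end
end
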